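/- arXiv:math/0504345 — 3 statements merged into one kernel-verified Lean document; each statement's English description precedes it below -/
import Mathlib

section
/- For each integer k ≥ 1 let x_k = 2 + 4k² − 2k and y_k = −2k². For real numbers a, b, the set { a·x_k + b·y_k : k ∈ ℕ, k ≥ 1 } ⊆ ℝ is bounded below if and only if 2a > b, or (b = 2a and a ≤ 0). -/
/-!
`a * x_k + b * y_k` is the quadratic `2 * (2 * a - b) * k ^ 2 - 2 * a * k + 2 * a` in `k`. Its
lower boundedness is decided by the sign of the leading coefficient `2 * (2 * a - b)` and, when
this vanishes, by the sign of the linear coefficient `-2 * a`.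
-/

open Filter

theorem bddBelow_image_Ici_iff_isBoundedUnder_ge {α : Type*} [Preorder α] [IsCodirectedOrder α]
    (u : ℕ → α) (n : ℕ) :
    BddBelow (u '' Set.Ici n) ↔ IsBoundedUnder (· ≥ ·) atTop u := by
  refine ⟨fun ⟨m, hm⟩ ↦ isBoundedUnder_of_eventually_ge (a := m) ?_,
    fun hu ↦ hu.bddBelow_range.mono (Set.image_subset_range _ _)⟩
  filter_upwards [eventually_ge_atTop n] with k hk using hm (Set.mem_image_of_mem u hk)

section EventualLowerBounds

variable {R ι : Type*} [CommRing R] [LinearOrder R] [IsStrictOrderedRing R] [Archimedean R]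
  {l : Filter ι} {x : ι → R} {p q : R}

theorem tendsto_linear_atTop (hx : Tendsto x l atTop) (hq : 0 < q) (r : R) :
    Tendsto (fun i ↦ q * x i + r) l atTop :=
  tendsto_atTop_add_const_right l r (hx.const_mul_atTop' hq)

theorem tendsto_linear_atBot (hx : Tendsto x l atTop) (hq : q < 0) (r : R) :
    Tendsto (fun i ↦ q * x i + r) l atBot := by
  refine (tendsto_neg_atTop_atBot.comp
    (tendsto_linear_atTop hx (neg_pos.2 hq) (-r))).congr fun i ↦ ?_
  simp only [Function.comp_apply]
  ring

theorem tendsto_quadratic_atTop (hx : Tendsto x l atTop) (hp : 0 < p) (q r : R) :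
    Tendsto (fun i ↦ p * x i ^ 2 + q * x i + r) l atTop := by
  refine (tendsto_atTop_add_const_right l r
    ((tendsto_linear_atTop hx hp q).atTop_mul_atTop₀ hx)).congr fun i ↦ ?_
  ring

theorem tendsto_quadratic_atBot (hx : Tendsto x l atTop) (hp : p < 0) (q r : R) :
    Tendsto (fun i ↦ p * x i ^ 2 + q * x i + r) l atBot := by
  refine (tendsto_neg_atTop_atBot.comp
    (tendsto_quadratic_atTop hx (neg_pos.2 hp) (-q) (-r))).congr fun i ↦ ?_
  simp only [Function.comp_apply]
  ring

variable [l.NeBot]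

theorem isBoundedUnder_ge_linear_iff (hx : Tendsto x l atTop) (q r : R) :
    IsBoundedUnder (· ≥ ·) l (fun i ↦ q * x i + r) ↔ 0 ≤ q := by
  rcases lt_trichotomy q 0 with hq | rfl | hq
  · exact iff_of_false (not_isBoundedUnder_of_tendsto_atBot (tendsto_linear_atBot hx hq r))
      hq.not_ge
  · simpa only [zero_mul, zero_add, le_refl, iff_true] using isBoundedUnder_const
  · exact iff_of_true (isBoundedUnder_of_eventually_ge
      ((tendsto_linear_atTop hx hq r).eventually_ge_atTop 0)) hq.le

theorem isBoundedUnder_ge_quadratic_iff (hx : Tendsto x l atTop) (p q r : R) :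
    IsBoundedUnder (· ≥ ·) l (fun i ↦ p * x i ^ 2 + q * x i + r) ↔ 0 < p ∨ p = 0 ∧ 0 ≤ q := by
  rcases lt_trichotomy p 0 with hp | rfl | hp
  · exact iff_of_false (not_isBoundedUnder_of_tendsto_atBot (tendsto_quadratic_atBot hx hp q r))
      (by simp only [hp.not_gt, hp.ne, false_and, or_self, not_false_eq_true])
  · simpa only [zero_mul, zero_add, lt_irrefl, true_and, false_or]
      using isBoundedUnder_ge_linear_iff hx q r
  · exact iff_of_true (isBoundedUnder_of_eventually_ge
      ((tendsto_quadratic_atTop hx hp q r).eventually_ge_atTop 0)) (Or.inl hp)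

end EventualLowerBounds

theorem bddBelow_iff_general {R : Type*} [CommRing R] [LinearOrder R] [IsStrictOrderedRing R]
    [Archimedean R] (a b : R) :
    BddBelow {z : R | ∃ k : ℕ, 1 ≤ k ∧
        z = a * (2 + 4 * (k : R) ^ 2 - 2 * (k : R)) + b * (-2 * (k : R) ^ 2)} ↔
      (2 * a > b ∨ (b = 2 * a ∧ a ≤ 0)) := by
  have hset : {z : R | ∃ k : ℕ, 1 ≤ k ∧
        z = a * (2 + 4 * (k : R) ^ 2 - 2 * (k : R)) + b * (-2 * (k : R) ^ 2)} =
      (fun k : ℕ ↦ 2 * (2 * a - b) * (k : R) ^ 2 + -2 * a * k + 2 * a) '' Set.Ici 1 := by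
    ext z
    refine exists_congr fun k ↦ and_congr_right fun _ ↦ ?_
    rw [eq_comm]
    ring_nf
  have hlead_pos : 0 < 2 * (2 * a - b) ↔ 2 * a > b := by constructor <;> intro <;> linarith
  have hlead_zero : 2 * (2 * a - b) = 0 ↔ b = 2 * a := by constructor <;> intro <;> linarith
  have hlinear_nonneg : 0 ≤ -2 * a ↔ a ≤ 0 := by constructor <;> intro <;> linarith
  rw [hset, bddBelow_image_Ici_iff_isBoundedUnder_ge,
    isBoundedUnder_ge_quadratic_iff tendsto_natCast_atTop_atTop,
    hlead_pos, hlead_zero, hlinear_nonneg]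

/-- For `x_k = 2 + 4k² − 2k` and `y_k = −2k²` (`k ≥ 1`), the set
`{ a·x_k + b·y_k : k ≥ 1 }` is bounded below iff `2a > b`, or `b = 2a` and `a ≤ 0`. -/
theorem bddBelow_iff (a b : ℝ) :
    BddBelow {z : ℝ | ∃ k : ℕ, 1 ≤ k ∧
        z = a * (2 + 4 * (k : ℝ) ^ 2 - 2 * (k : ℝ)) + b * (-2 * (k : ℝ) ^ 2)} ↔
      (2 * a > b ∨ (b = 2 * a ∧ a ≤ 0)) :=
  bddBelow_iff_general a b
end

section
/- Let g be a natural number. Let F be the free group on the index set Fin g ⊕ Fin g, with generators a_i = of(inl i) and b_i = of(inr i) for i = 0,…,g−1. Let R ⊆ F consist of the surface relation ∏_{i=0}^{g−1} (a_i · b_i · a_i⁻¹ · b_i⁻¹) (product taken in increasing order of i) together with the g elements b_0, …, b_{g−1}. Then the presented group F / (normal closure of R) is isomorphic to the free group on Fin g, via a_i ↦ of(i). -/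
namespace SurfaceToFree

variable (g : ℕ)

/-- The generators `a_i` of the free group on `Fin g ⊕ Fin g`. -/
def a (i : Fin g) : FreeGroup (Fin g ⊕ Fin g) := FreeGroup.of (Sum.inl i)

/-- The generators `b_i` of the free group on `Fin g ⊕ Fin g`. -/
def b (i : Fin g) : FreeGroup (Fin g ⊕ Fin g) := FreeGroup.of (Sum.inr i)

/-- The surface relation `∏_{i=0}^{g−1} a_i b_i a_i⁻¹ b_i⁻¹`, the product taken in
increasing order of `i`. -/
def surfaceRel : FreeGroup (Fin g ⊕ Fin g) :=
  ((List.finRange g).map fun i => a g i * b g i * (a g i)⁻¹ * (b g i)⁻¹).prod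

/-- The relation set: the surface relation together with `b_0, …, b_{g−1}`. -/
def rels : Set (FreeGroup (Fin g ⊕ Fin g)) := {surfaceRel g} ∪ Set.range (b g)

section KillRight

/-- The retraction of the free group on `α ⊕ β` onto the free factor on `α`, sending the
generators from `β` to `1`. -/
abbrev killRight (α β : Type*) : FreeGroup (α ⊕ β) →* FreeGroup α :=
  FreeGroup.lift (Sum.elim FreeGroup.of 1)

variable {α β : Type*} {R : Set (FreeGroup (α ⊕ β))}

/-- The isomorphism onto the free group on `α` of a group presented on `α ⊕ β` in which the
generators from `β` are trivial and whose relators impose nothing further. -/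
def presentedGroupEquivFreeGroup (hR : ∀ r ∈ R, killRight α β r = 1)
    (hβ : ∀ y : β, (PresentedGroup.of (Sum.inr y) : PresentedGroup R) = 1) :
    PresentedGroup R ≃* FreeGroup α :=
  MonoidHom.toMulEquiv (PresentedGroup.toGroup hR)
    (FreeGroup.lift fun x ↦ PresentedGroup.of (Sum.inl x))
    (PresentedGroup.ext <| by rintro (x | y) <;> simp [hβ])
    (FreeGroup.ext_hom _ _ fun x ↦ by simp)

lemma presentedGroupEquivFreeGroup_of_inl (hR : ∀ r ∈ R, killRight α β r = 1)
    (hβ : ∀ y : β, (PresentedGroup.of (Sum.inr y) : PresentedGroup R) = 1) (x : α) :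
    presentedGroupEquivFreeGroup hR hβ (PresentedGroup.of (Sum.inl x)) = FreeGroup.of x :=
  PresentedGroup.toGroup.of hR (x := Sum.inl x)

end KillRight

section SurfaceRelation

variable {g}

lemma map_surfaceRel_eq_one {G : Type*} [Group G] (f : FreeGroup (Fin g ⊕ Fin g) →* G)
    (hf : ∀ i, f (b g i) = 1) : f (surfaceRel g) = 1 := by
  have map_commutator (i : Fin g) : f (a g i * b g i * (a g i)⁻¹ * (b g i)⁻¹) = 1 := by
    simp [hf i]
  rw [surfaceRel, map_list_prod, List.map_map]
  exact List.prod_eq_one <| List.forall_mem_map.mpr fun i _ ↦ map_commutator i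

lemma killRight_eq_one_of_mem_rels {r : FreeGroup (Fin g ⊕ Fin g)} (hr : r ∈ rels g) :
    killRight (Fin g) (Fin g) r = 1 := by
  obtain rfl | ⟨i, rfl⟩ := hr
  · exact map_surfaceRel_eq_one _ fun i ↦ by simp [b]
  · simp [b]

lemma presentedGroup_of_inr_eq_one (i : Fin g) :
    (PresentedGroup.of (Sum.inr i) : PresentedGroup (rels g)) = 1 :=
  PresentedGroup.one_of_mem (Or.inr ⟨i, rfl⟩)

end SurfaceRelation

/-- The quotient of the free group on `a_0, b_0, …, a_{g−1}, b_{g−1}` by the normal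
closure of the surface relation and the `b_i` is free of rank `g`, via `a_i ↦ of i`. -/
theorem presentedGroup_iso_freeGroup :
    ∃ e : PresentedGroup (rels g) ≃* FreeGroup (Fin g),
      ∀ i : Fin g, e (PresentedGroup.of (Sum.inl i)) = FreeGroup.of i := by
  have relators_killed : ∀ r ∈ rels g, killRight (Fin g) (Fin g) r = 1 :=
    fun _ ↦ killRight_eq_one_of_mem_rels
  exact ⟨presentedGroupEquivFreeGroup relators_killed presentedGroup_of_inr_eq_one,
    presentedGroupEquivFreeGroup_of_inl _ _⟩

end SurfaceToFree
end

section
/- Let n be a natural number. Define the additive group endomorphism H of ℤ × ℤ by H(u,v) = (v, −u + (2−n)·v) (the linear map with matrix [[0,1],[−1,2−n]] acting on column vectors). Then the quotient of ℤ × ℤ by the range of the endomorphism H − id (i.e. by the subgroup { H(w) − w : w ∈ ℤ × ℤ }) is isomorphic, as an additive group, to ℤ/nℤ. -/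
/-!
Let `H (u, v) = (v, φ u + ψ v)` be the companion endomorphism of `X² - ψ X - φ`. Adding `φ` of the
first coordinate of `H (u, v) - (u, v) = (v - u, φ u + ψ v - v)` to the second eliminates `u` and
leaves `-(1 - φ - ψ) v`, so the cokernel of `H - 1` is that of the characteristic polynomial at `1`.
For `φ = -1` and `ψ = 2 - n` this value is `n`.
-/

theorem range_eq_zmultiples_map_one {G : Type*} [AddGroup G] (f : ℤ →+ G) :
    f.range = AddSubgroup.zmultiples (f 1) := by
  rw [← AddSubgroup.range_zmultiplesHom]
  exact congrArg AddMonoidHom.range ((zmultiplesHom G).apply_symm_apply f).symm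

/-- The cokernel of an endomorphism of `ℤ`, identified with `ℤ/nℤ` where `n ≥ 0` is the image of
`1`. -/
noncomputable def quotientRangeEquivZMod {f : ℤ →+ ℤ} {n : ℕ} (hf : f 1 = n) :
    ℤ ⧸ f.range ≃+ ZMod n :=
  (QuotientAddGroup.quotientAddEquivOfEq (by rw [range_eq_zmultiples_map_one, hf])).trans
    (Int.quotientZMultiplesNatEquivZMod n)

section Companion

variable {A : Type*} [AddCommGroup A] {φ ψ : A →+ A} {H : A × A →+ A × A}

theorem mem_range_sub_id_iff_of_companion (hH : ∀ w, H w = (w.2, φ w.1 + ψ w.2)) {w : A × A} :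
    w ∈ (H - AddMonoidHom.id (A × A)).range ↔ φ w.1 + w.2 ∈ (AddMonoidHom.id A - φ - ψ).range := by
  obtain ⟨p, q⟩ := w
  simp only [AddMonoidHom.mem_range, AddMonoidHom.sub_apply, AddMonoidHom.id_apply, hH,
    Prod.exists, Prod.mk_sub_mk, Prod.mk.injEq]
  constructor
  · rintro ⟨u, v, rfl, rfl⟩
    refine ⟨-v, ?_⟩
    simp only [map_neg, map_sub]
    abel
  · rintro ⟨v, hv⟩
    refine ⟨-v - p, -v, by abel, ?_⟩
    rw [← sub_eq_of_eq_add' hv]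
    simp only [map_neg, map_sub]
    abel

theorem quotient_range_sub_id_iso_zmod_general (hH : ∀ w, H w = (w.2, φ w.1 + ψ w.2)) :
    Nonempty (((A × A) ⧸ (H - AddMonoidHom.id (A × A)).range) ≃+
      A ⧸ (AddMonoidHom.id A - φ - ψ).range) := by
  let π : A × A →+ A ⧸ (AddMonoidHom.id A - φ - ψ).range :=
    (QuotientAddGroup.mk' (AddMonoidHom.id A - φ - ψ).range).comp (φ.coprod (AddMonoidHom.id A))
  have π_surjective : Function.Surjective π :=
    (QuotientAddGroup.mk'_surjective _).comp fun q ↦ ⟨(0, q), by simp⟩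
  have range_eq_ker : (H - AddMonoidHom.id (A × A)).range = π.ker := by
    ext w
    rw [mem_range_sub_id_iff_of_companion hH, ← AddMonoidHom.comap_ker, QuotientAddGroup.ker_mk']
    rfl
  exact ⟨(QuotientAddGroup.quotientAddEquivOfEq range_eq_ker).trans
    (QuotientAddGroup.quotientKerEquivOfSurjective π π_surjective)⟩

end Companion

/-- Let `H : ℤ × ℤ → ℤ × ℤ` be the additive endomorphism with matrix
`[[0,1],[−1,2−n]]`, i.e. `H(u,v) = (v, −u + (2−n)v)`. Then the quotient of `ℤ × ℤ` by
the range of `H − id` is isomorphic to `ℤ/nℤ`. -/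
theorem quotient_range_sub_id_iso_zmod (n : ℕ) (H : ℤ × ℤ →+ ℤ × ℤ)
    (hH : ∀ w : ℤ × ℤ, H w = (w.2, -w.1 + (2 - (n : ℤ)) * w.2)) :
    Nonempty (((ℤ × ℤ) ⧸ (H - AddMonoidHom.id (ℤ × ℤ)).range) ≃+ ZMod n) := by
  obtain ⟨e⟩ := quotient_range_sub_id_iso_zmod_general (φ := -AddMonoidHom.id ℤ)
    (ψ := AddMonoidHom.mulLeft (2 - (n : ℤ))) hH
  exact ⟨e.trans (quotientRangeEquivZMod (by simp))⟩
end
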